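/- Let W be a finite set, let P : W → ℝ be a function with P(w) ≥ 0 for all w ∈ W and ∑_{w ∈ W} P(w) = 1, let S be a set, let M : W → Set S be a function assigning to each element of W a set of 'models', and let Q ⊆ S be a predicate. Then ∑_{w : M(w) ≠ ∅ and ∀ m ∈ M(w), m ∈ Q} P(w) + ∑_{w : ∃ m ∈ M(w), m ∉ Q} P(w) + ∑_{w : M(w) = ∅} P(w) = 1. -/

import Mathlib

section

variable {W S A : Type*} [AddCommMonoid A]

theorem ne_empty_and_not_forall_mem_iff {T Q : Set S} :
    (T ≠ ∅ ∧ ¬ ∀ m ∈ T, m ∈ Q) ↔ ∃ m ∈ T, m ∉ Q := by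
  constructor
  · rintro ⟨-, hTQ⟩
    exact Set.not_subset.mp hTQ
  · rintro ⟨m, hmT, hmQ⟩
    exact ⟨Set.nonempty_iff_ne_empty.mp ⟨m, hmT⟩, fun hTQ => hmQ (hTQ m hmT)⟩

open Classical in
theorem lower_add_upper_eq_sum_consistent (s : Finset W) (P : W → A) (M : W → Set S) (Q : Set S) :
    (∑ w ∈ s.filter (fun w => M w ≠ ∅ ∧ ∀ m ∈ M w, m ∈ Q), P w) +
    (∑ w ∈ s.filter (fun w => ∃ m ∈ M w, m ∉ Q), P w) =
    ∑ w ∈ s.filter (fun w => M w ≠ ∅), P w := by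
  rw [← Finset.sum_filter_add_sum_filter_not (s.filter fun w => M w ≠ ∅)
    (fun w => ∀ m ∈ M w, m ∈ Q) P]
  simp only [Finset.filter_filter, ne_empty_and_not_forall_mem_iff]

open Classical in
theorem lower_upper_inconsistent_sum_general
    (s : Finset W) (P : W → A) (M : W → Set S) (Q : Set S) :
    (∑ w ∈ s.filter (fun w => M w ≠ ∅ ∧ ∀ m ∈ M w, m ∈ Q), P w) +
    (∑ w ∈ s.filter (fun w => ∃ m ∈ M w, m ∉ Q), P w) +
    (∑ w ∈ s.filter (fun w => M w = ∅), P w) = ∑ w ∈ s, P w := by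
  rw [lower_add_upper_eq_sum_consistent, add_comm]
  exact Finset.sum_filter_add_sum_filter_not s (fun w => M w = ∅) P

end

open Classical in
/-- The paper's identity `P̲(q) + P̄(not q) + P(inc) = 1` for the credal semantics:
the probabilities of the worlds all of whose models satisfy the query (and which
have at least one model), of the worlds with some model not satisfying the query,
and of the worlds with no model, sum to one. -/
theorem lower_upper_inconsistent_sum {W S : Type*} [Fintype W]
    (P : W → ℝ) (M : W → Set S) (Q : Set S)
    (hP : ∀ w, 0 ≤ P w) (hsum : ∑ w, P w = 1) :
    (∑ w ∈ Finset.univ.filter (fun w => M w ≠ ∅ ∧ ∀ m ∈ M w, m ∈ Q), P w) +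
    (∑ w ∈ Finset.univ.filter (fun w => ∃ m ∈ M w, m ∉ Q), P w) +
    (∑ w ∈ Finset.univ.filter (fun w => M w = ∅), P w) = 1 :=
  (lower_upper_inconsistent_sum_general Finset.univ P M Q).trans hsum
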